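/- For each integer i ≥ 1, the limit a(i) := lim_{n→∞} a(n,i) exists; moreover a(1) = 1, and for every i ≥ 1 the series Σ_{j=i+1}^∞ a(j)·p(j,i) converges and equals a(i). -/

import Mathlib

open Real Filter Topology MeasureTheory

/-- The harmonic number `h n = ∑_{i=1}^n 1/i`, with `h 0 = 0`. -/
noncomputable def harmonic' (n : ℕ) : ℝ := ∑ i ∈ Finset.Icc 1 n, (1 : ℝ) / i

/-- One-step transition probabilities of the harmonic descent chain,
`p j i = 1/((j-i)·h_{j-1})` for `1 ≤ i < j`. -/
noncomputable def hdP (j i : ℕ) : ℝ := 1 / (((j : ℝ) - (i : ℝ)) * harmonic' (j - 1))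

/-- `b 1 = 1` and `b i = 6 h_{i-1} / (π² (i-1))` for `i ≥ 2`. -/
noncomputable def hdB (i : ℕ) : ℝ :=
  if i = 1 then 1 else 6 * harmonic' (i - 1) / (Real.pi ^ 2 * ((i : ℝ) - 1))

/-- `IsOccupation a` says that `a n i` are the occupation probabilities of the harmonic
descent chain: `a n n = 1` and `a n i` satisfies the forward recursion. -/
def IsOccupation (a : ℕ → ℕ → ℝ) : Prop :=
  (∀ n : ℕ, 1 ≤ n → a n n = 1) ∧
    ∀ n i : ℕ, 1 ≤ i → i < n → a n i = ∑ j ∈ Finset.Ioc i n, a n j * hdP j i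

/-- The sum `∑_{r < l} 1/(N-r)` of the `l` smallest terms of the harmonic number `h N`. -/
noncomputable def harmonicTail (N l : ℕ) : ℝ := ∑ r ∈ Finset.range l, 1 / ((N : ℝ) - r)

lemma harmonicTail_succ (N l : ℕ) :
    harmonicTail N (l + 1) = harmonicTail N l + 1 / ((N : ℝ) - l) :=
  Finset.sum_range_succ _ _

lemma sum_range_add_one_eq_sum_Icc (f : ℕ → ℝ) (N : ℕ) :
    ∑ r ∈ Finset.range N, f (r + 1) = ∑ k ∈ Finset.Icc 1 N, f k := by
  rw [Finset.range_eq_Ico, Finset.sum_Ico_add', zero_add, Finset.Ico_add_one_right_eq_Icc]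

lemma harmonicTail_self (N : ℕ) : harmonicTail N N = harmonic' N := by
  unfold harmonicTail harmonic'
  rw [← Finset.sum_range_reflect, ← sum_range_add_one_eq_sum_Icc]
  refine Finset.sum_congr rfl fun r hr => ?_
  have hr : r < N := Finset.mem_range.mp hr
  rw [show N - 1 - r = N - (r + 1) by omega, Nat.cast_sub (by omega)]
  simp

lemma harmonicTail_nonneg {N l : ℕ} (h : l ≤ N) : 0 ≤ harmonicTail N l := by
  refine Finset.sum_nonneg fun r hr => ?_
  have : (r : ℝ) < N := by exact_mod_cast (Finset.mem_range.mp hr).trans_le h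
  exact one_div_nonneg.mpr (by linarith)

lemma harmonicTail_pos {N l : ℕ} (hl : 1 ≤ l) (h : l ≤ N) : 0 < harmonicTail N l := by
  refine Finset.sum_pos (fun r hr => ?_) ⟨0, Finset.mem_range.mpr hl⟩
  have : (r : ℝ) < N := by exact_mod_cast (Finset.mem_range.mp hr).trans_le h
  exact one_div_pos.mpr (by linarith)

lemma harmonic'_pos {N : ℕ} (h : 1 ≤ N) : 0 < harmonic' N :=
  harmonicTail_self N ▸ harmonicTail_pos h le_rfl

lemma sub_mul_harmonicTail_le {N m l : ℕ} (hml : m ≤ l) (hl : l ≤ N) :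
    ((N : ℝ) - l) * harmonicTail N m ≤ ((N : ℝ) + 1 - l) * harmonicTail (N + 1) m := by
  unfold harmonicTail
  rw [Finset.mul_sum, Finset.mul_sum]
  refine Finset.sum_le_sum fun r hr => ?_
  have h1 : (r : ℝ) < l := by exact_mod_cast (Finset.mem_range.mp hr).trans_le hml
  have h2 : (l : ℝ) ≤ N := by exact_mod_cast hl
  push_cast
  rw [mul_one_div, mul_one_div, div_le_div_iff₀ (by linarith) (by linarith)]
  nlinarith

/-- The ratio `harmonicTail (N + 1) l / harmonicTail N l` is antitone in `l`. -/
lemma harmonicTail_mul_le {N m l : ℕ} (hml : m ≤ l) (hl : l ≤ N) :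
    harmonicTail (N + 1) l * harmonicTail N m ≤ harmonicTail (N + 1) m * harmonicTail N l := by
  induction l, hml using Nat.le_induction with
  | base => exact le_rfl
  | succ l hml ih =>
    have hlN : (l : ℝ) + 1 ≤ N := by exact_mod_cast hl
    have h1 := ih (by omega)
    have h2 : harmonicTail N m / ((N : ℝ) + 1 - l)
        ≤ harmonicTail (N + 1) m / ((N : ℝ) - l) := by
      rw [div_le_div_iff₀ (by linarith) (by linarith)]
      linarith [sub_mul_harmonicTail_le hml (show l ≤ N by omega)]
    rw [harmonicTail_succ, harmonicTail_succ, add_mul, mul_add, mul_one_div, one_div_mul_eq_div]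
    push_cast
    linarith

lemma hdP_succ (N i : ℕ) : hdP (N + 1) i = 1 / (((N : ℝ) + 1 - i) * harmonic' N) := by
  simp [hdP]

lemma hdP_pos {j i : ℕ} (hi : 1 ≤ i) (hij : i < j) : 0 < hdP j i := by
  have : (i : ℝ) < j := by exact_mod_cast hij
  exact one_div_pos.mpr (mul_pos (by linarith) (harmonic'_pos (by omega)))

lemma sum_hdP {N : ℕ} (hN : 1 ≤ N) : ∑ k ∈ Finset.Icc 1 N, hdP (N + 1) k = 1 := by
  have hpos := harmonic'_pos hN
  have h : ∑ k ∈ Finset.Icc 1 N, hdP (N + 1) k = harmonicTail N N / harmonic' N := by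
    unfold harmonicTail
    rw [Finset.sum_div, ← sum_range_add_one_eq_sum_Icc]
    refine Finset.sum_congr rfl fun r _ => ?_
    rw [hdP_succ, div_div]
    push_cast
    ring_nf
  rw [h, harmonicTail_self, div_self hpos.ne']

/-- Jumps from `j` to different states below `j/2` have comparable probabilities. -/
lemma hdP_le_two_mul {j i k : ℕ} (hi : 1 ≤ i) (hij : 2 * i ≤ j) (hk : k < j) :
    hdP j i ≤ 2 * hdP j k := by
  have h1 : (2 : ℝ) * i ≤ j := by exact_mod_cast hij
  have h2 : (k : ℝ) < j := by exact_mod_cast hk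
  have h3 : (1 : ℝ) ≤ i := by exact_mod_cast hi
  have h4 : (0 : ℝ) ≤ k := k.cast_nonneg
  have hpos := harmonic'_pos (show 1 ≤ j - 1 by omega)
  unfold hdP
  rw [mul_one_div, div_le_div_iff₀ (mul_pos (by linarith) hpos) (mul_pos (by linarith) hpos)]
  nlinarith

/-- Summation by parts against `harmonicTail N`. -/
lemma sum_sub_mul_harmonicTail (f : ℕ → ℝ) {N m M : ℕ} (hM : m ≤ M) :
    ∑ l ∈ Finset.Ico (m + 1) (M + 1), (f l - f (l + 1)) * harmonicTail N l
      = f (m + 1) * harmonicTail N m + ∑ j ∈ Finset.Ico (m + 1) (M + 1), f j / ((N : ℝ) + 1 - j)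
        - f (M + 1) * harmonicTail N M := by
  induction M, hM using Nat.le_induction with
  | base => simp
  | succ M hM ih =>
    rw [Finset.sum_Ico_succ_top (show m + 1 ≤ M + 1 by omega),
      Finset.sum_Ico_succ_top (show m + 1 ≤ M + 1 by omega), ih, harmonicTail_succ]
    push_cast
    rw [add_sub_add_right_eq_sub]
    ring

namespace IsOccupation

variable {a : ℕ → ℕ → ℝ}

lemma nonneg (ha : IsOccupation a) {n : ℕ} (k : ℕ) :
    ∀ i, 1 ≤ i → i ≤ n → n ≤ i + k → 0 ≤ a n i := by
  induction k with
  | zero =>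
    intro i hi h1 h2
    obtain rfl : i = n := by omega
    exact ha.1 i hi ▸ zero_le_one
  | succ k ih =>
    intro i hi h1 h2
    obtain rfl | h := h1.eq_or_lt
    · exact ha.1 i hi ▸ zero_le_one
    rw [ha.2 n i hi h]
    refine Finset.sum_nonneg fun j hj => ?_
    rw [Finset.mem_Ioc] at hj
    exact mul_nonneg (ih j (by omega) hj.2 (by omega)) (hdP_pos hi hj.1).le

/-- Decomposition of the occupation probability according to the first jump. -/
lemma backward (ha : IsOccupation a) {n : ℕ} (k : ℕ) :
    ∀ i, 1 ≤ i → i < n → n ≤ i + k → a n i = ∑ j ∈ Finset.Ico i n, hdP n j * a j i := by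
  induction k with
  | zero => intro i _ h1 h2; omega
  | succ k ih =>
    intro i hi hin hk
    have hsplit : a n i = hdP n i + ∑ j ∈ Finset.Ioo i n, a n j * hdP j i := by
      rw [ha.2 n i hi hin, ← Finset.Ioo_insert_right hin,
        Finset.sum_insert Finset.right_notMem_Ioo, ha.1 n (by omega), one_mul]
    rw [hsplit, ← Finset.Ioo_insert_left hin, Finset.sum_insert Finset.left_notMem_Ioo,
      ha.1 i hi, mul_one]
    congr 1
    calc ∑ j ∈ Finset.Ioo i n, a n j * hdP j i
        = ∑ j ∈ Finset.Ioo i n, ∑ l ∈ Finset.Ico j n, hdP n l * a l j * hdP j i := by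
          refine Finset.sum_congr rfl fun j hj => ?_
          rw [Finset.mem_Ioo] at hj
          rw [ih j (by omega) hj.2 (by omega), Finset.sum_mul]
      _ = ∑ l ∈ Finset.Ioo i n, ∑ j ∈ Finset.Ioc i l, hdP n l * a l j * hdP j i := by
          refine Finset.sum_comm' fun j l => ?_
          simp only [Finset.mem_Ioo, Finset.mem_Ico, Finset.mem_Ioc]
          omega
      _ = ∑ l ∈ Finset.Ioo i n, hdP n l * a l i := by
          refine Finset.sum_congr rfl fun l hl => ?_
          rw [ha.2 l i hi (Finset.mem_Ioo.mp hl).1, Finset.mul_sum]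
          simp only [mul_assoc]

/-- The successive differences `a l i - a (l + 1) i` solve a renewal-type equation. -/
lemma sum_differences (ha : IsOccupation a) {N m : ℕ} (h : m + 1 ≤ N) :
    ∑ l ∈ Finset.Ico (m + 1) (N + 1), (a l (m + 1) - a (l + 1) (m + 1)) * harmonicTail N l
      = harmonicTail N m := by
  have hpos := harmonic'_pos (show 1 ≤ N by omega)
  rw [sum_sub_mul_harmonicTail (fun l => a l (m + 1)) (by omega : m ≤ N),
    ha.1 (m + 1) (by omega), harmonicTail_self,
    ha.backward (N + 1) (m + 1) (by omega) (by omega) (by omega), Finset.sum_mul, one_mul,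
    add_sub_assoc, add_eq_left, sub_eq_zero]
  refine Finset.sum_congr rfl fun j hj => ?_
  have : (j : ℝ) < N + 1 := by exact_mod_cast (Finset.mem_Ico.mp hj).2
  have : (N : ℝ) + 1 - j ≠ 0 := by linarith
  rw [hdP_succ]
  field_simp

/-- The chain started at `n` jumps across the level `I` exactly once. -/
lemma sum_crossing (ha : IsOccupation a) {n : ℕ} (k : ℕ) :
    ∀ I, 1 ≤ I → I + 1 + k = n →
      ∑ j ∈ Finset.Ioc I n, a n j * ∑ l ∈ Finset.Icc 1 I, hdP j l = 1 := by
  induction k with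
  | zero =>
    rintro I hI rfl
    simp [sum_hdP hI, ha.1 (I + 1) (by omega)]
  | succ k ih =>
    intro I hI hn
    have h := ih (I + 1) (by omega) (by omega)
    simp only [Finset.sum_Icc_succ_top (show 1 ≤ I + 1 by omega), mul_add,
      Finset.sum_add_distrib] at h
    rw [← ha.2 n (I + 1) (by omega) (by omega)] at h
    rw [← Finset.Icc_add_one_left_eq_Ioc, ← Finset.Ioc_insert_left (by omega),
      Finset.sum_insert (by simp), sum_hdP hI, mul_one, add_comm]
    exact h

lemma apply_one (ha : IsOccupation a) {n : ℕ} (hn : 1 ≤ n) : a n 1 = 1 := by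
  obtain rfl | h := hn.eq_or_lt
  · exact ha.1 1 le_rfl
  · rw [ha.2 n 1 le_rfl h]
    simpa using ha.sum_crossing (n - 2) 1 le_rfl (by omega)

lemma succ_le (ha : IsOccupation a) {i n : ℕ} (hi : 1 ≤ i) (hin : i ≤ n) :
    a (n + 1) i ≤ a n i := by
  obtain rfl | hi1 := hi.eq_or_lt
  · rw [ha.apply_one hin, ha.apply_one (by omega)]
  obtain ⟨m, rfl⟩ : ∃ m, i = m + 1 := ⟨i - 1, by omega⟩
  induction n using Nat.strong_induction_on with
  | _ n ih =>
  obtain ⟨N, rfl⟩ : ∃ N, n = N + 1 := ⟨n - 1, by omega⟩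
  have hlast := harmonicTail_pos (N := N + 1) (l := N + 1) (by omega) le_rfl
  have hm := harmonicTail_pos (N := N) (l := m) (by omega) (by omega)
  have hnew := ha.sum_differences (N := N + 1) (m := m) hin
  rw [Finset.sum_Ico_succ_top hin] at hnew
  have hle : (∑ l ∈ Finset.Ico (m + 1) (N + 1),
      (a l (m + 1) - a (l + 1) (m + 1)) * harmonicTail (N + 1) l) * harmonicTail N m
        ≤ harmonicTail (N + 1) m * harmonicTail N m := by
    obtain h | h := Nat.lt_or_ge N (m + 1)
    · rw [Finset.Ico_eq_empty (by omega), Finset.sum_empty, zero_mul]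
      exact mul_nonneg (harmonicTail_nonneg (by omega)) hm.le
    · nth_rw 2 [← ha.sum_differences h]
      rw [Finset.sum_mul, Finset.mul_sum]
      refine Finset.sum_le_sum fun l hl => ?_
      rw [Finset.mem_Ico] at hl
      have hd := ih l hl.2 hl.1
      have hK := harmonicTail_mul_le (N := N) (m := m) (l := l) (by omega) (by omega)
      linarith [mul_le_mul_of_nonneg_left hK (sub_nonneg.mpr hd)]
  have hsum := le_of_mul_le_mul_right hle hm
  exact sub_nonneg.mp (nonneg_of_mul_nonneg_left (by linarith) hlast)

/-- Uniformly in `n`, jumps from above `J` contribute at most `2/J` to `a n i`. -/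
lemma sum_tail_le (ha : IsOccupation a) {n i J : ℕ} (hi : 1 ≤ i) (hJ : 2 * i ≤ J) (hn : J < n) :
    ∑ j ∈ Finset.Ioc J n, a n j * hdP j i ≤ 2 / J := by
  have hJ0 : (0 : ℝ) < J := by exact_mod_cast (by omega : 0 < J)
  have hcross := ha.sum_crossing (n := n) (n - (J + 1)) J (by omega) (by omega)
  rw [le_div_iff₀ hJ0, Finset.sum_mul, ← mul_one 2, ← hcross, Finset.mul_sum]
  refine Finset.sum_le_sum fun j hj => ?_
  rw [Finset.mem_Ioc] at hj
  have hcomp : hdP j i * J ≤ 2 * ∑ l ∈ Finset.Icc 1 J, hdP j l := by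
    rw [Finset.mul_sum]
    calc hdP j i * J = ∑ l ∈ Finset.Icc 1 J, hdP j i := by simp [mul_comm]
      _ ≤ _ := Finset.sum_le_sum fun l hl =>
        hdP_le_two_mul hi (by omega) ((Finset.mem_Icc.mp hl).2.trans_lt hj.1)
  linarith [mul_le_mul_of_nonneg_left hcomp (ha.nonneg n j (by omega) hj.2 (by omega))]

lemma abs_sub_sum_le (ha : IsOccupation a) {n i J : ℕ} (hi : 1 ≤ i) (hJ : 2 * i ≤ J)
    (hn : J < n) : |a n i - ∑ j ∈ Finset.Ioc i J, a n j * hdP j i| ≤ 2 / J := by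
  rw [ha.2 n i hi (by omega), ← Finset.sum_Ioc_consecutive _ (show i ≤ J by omega) hn.le,
    add_sub_cancel_left, abs_of_nonneg]
  · exact ha.sum_tail_le hi hJ hn
  · refine Finset.sum_nonneg fun j hj => ?_
    rw [Finset.mem_Ioc] at hj
    exact mul_nonneg (ha.nonneg n j (by omega) hj.2 (by omega)) (hdP_pos hi (by omega)).le

lemma exists_tendsto (ha : IsOccupation a) {i : ℕ} (hi : 1 ≤ i) :
    ∃ L, 0 ≤ L ∧ Tendsto (fun n => a n i) atTop (𝓝 L) := by
  have hanti : Antitone fun n => a (n + i) i := antitone_nat_of_succ_le fun n => by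
    simpa only [Nat.add_right_comm n 1 i] using ha.succ_le hi (Nat.le_add_left i n)
  have hnonneg : ∀ n, 0 ≤ a (n + i) i := fun n =>
    ha.nonneg n i hi (Nat.le_add_left i n) (by omega)
  have hlim := tendsto_atTop_ciInf hanti ⟨0, Set.forall_mem_range.mpr hnonneg⟩
  exact ⟨_, le_ciInf hnonneg, (tendsto_add_atTop_iff_nat i).mp hlim⟩

/-- Limits of occupation probabilities satisfy the infinite forward recursion. -/
lemma hasSum_of_tendsto (ha : IsOccupation a) {A : ℕ → ℝ} (hA : ∀ i, 1 ≤ i → 0 ≤ A i)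
    (hlim : ∀ i, 1 ≤ i → Tendsto (fun n => a n i) atTop (𝓝 (A i))) {i : ℕ} (hi : 1 ≤ i) :
    HasSum (fun j : ℕ => if i < j then A j * hdP j i else 0) (A i) := by
  rw [hasSum_iff_tendsto_nat_of_nonneg, ← tendsto_add_atTop_iff_nat 1]
  · have hpartial (J : ℕ) : ∑ j ∈ Finset.range (J + 1), (if i < j then A j * hdP j i else 0)
        = ∑ j ∈ Finset.Ioc i J, A j * hdP j i := by
      rw [← Finset.sum_filter]
      refine Finset.sum_congr ?_ fun _ _ => rfl
      ext j
      simp only [Finset.mem_filter, Finset.mem_range, Finset.mem_Ioc]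
      omega
    simp only [hpartial]
    rw [tendsto_iff_dist_tendsto_zero]
    refine squeeze_zero' (.of_forall fun _ => dist_nonneg) ?_
      (tendsto_const_div_atTop_nhds_zero_nat 2)
    filter_upwards [eventually_ge_atTop (2 * i)] with J hJ
    rw [dist_comm, Real.dist_eq]
    refine le_of_tendsto ((hlim i hi).sub (tendsto_finsetSum _ fun j hj =>
      (hlim j ?_).mul_const _)).abs ((eventually_gt_atTop J).mono fun n hn =>
        ha.abs_sub_sum_le hi hJ hn)
    rw [Finset.mem_Ioc] at hj
    omega
  · intro j
    split_ifs with h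
    · exact mul_nonneg (hA j (by omega)) (hdP_pos hi h).le
    · exact le_rfl

end IsOccupation

theorem hd_occupation_limit_exists
    (a : ℕ → ℕ → ℝ)
    (ha_diag : ∀ n : ℕ, 1 ≤ n → a n n = 1)
    (ha_rec : ∀ n i : ℕ, 1 ≤ i → i < n →
      a n i = ∑ j ∈ Finset.Ioc i n, a n j * hdP j i) :
    ∃ A : ℕ → ℝ,
      (∀ i : ℕ, 1 ≤ i → Filter.Tendsto (fun n => a n i) Filter.atTop (𝓝 (A i))) ∧
      A 1 = 1 ∧
      (∀ i : ℕ, 1 ≤ i →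
        HasSum (fun j : ℕ => if i < j then A j * hdP j i else 0) (A i)) := by
  have ha : IsOccupation a := ⟨ha_diag, ha_rec⟩
  choose! A hA hlim using fun i (hi : 1 ≤ i) => ha.exists_tendsto hi
  refine ⟨A, hlim, ?_, fun i hi => ha.hasSum_of_tendsto hA hlim hi⟩
  refine tendsto_nhds_unique (hlim 1 le_rfl) (tendsto_const_nhds.congr' ?_)
  filter_upwards [eventually_ge_atTop 1] with n hn
  exact (ha.apply_one hn).symm
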